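/- arXiv:2210.12955 — 2 statements merged into one kernel-verified Lean document; each statement's English description precedes it below -/
import Mathlib

section
/- Let S be a finite set of replicas with |S| = 3f+1 and F ⊆ S with |F| ≤ f the faulty replicas. Let sent : S → ℕ → Prop model which replica sent an EPOCH-START message carrying which log position, and assume every correct replica sends at most one EPOCH-START for the epoch (for all r ∈ S \ F and all p, q : ℕ, if sent r p and sent r q then p = q). If Q₁, Q₂ ⊆ S are quorums with |Q₁| ≥ 2f+1 and |Q₂| ≥ 2f+1 such that sent r p₁ holds for every r ∈ Q₁ and sent r p₂ holds for every r ∈ Q₂, then p₁ = p₂. Consequently, all correct replicas that begin the epoch (each requiring such an epoch certificate matching its own log position) begin it at the same log position. -/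
theorem epoch_start_position_unique {α : Type*} [DecidableEq α] (f : ℕ)
    (S F Q₁ Q₂ : Finset α) (sent : α → ℕ → Prop) (p₁ p₂ : ℕ)
    (hS : S.card = 3 * f + 1) (hF : F ⊆ S) (hFcard : F.card ≤ f)
    (hhonest : ∀ r ∈ S, r ∉ F → ∀ p q : ℕ, sent r p → sent r q → p = q)
    (hQ₁ : Q₁ ⊆ S) (hQ₂ : Q₂ ⊆ S)
    (hc₁ : 2 * f + 1 ≤ Q₁.card) (hc₂ : 2 * f + 1 ≤ Q₂.card)
    (hsent₁ : ∀ r ∈ Q₁, sent r p₁) (hsent₂ : ∀ r ∈ Q₂, sent r p₂) :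
    p₁ = p₂ := by
  have h_union : (Q₁ ∪ Q₂).card ≤ S.card := Finset.card_le_card (Finset.union_subset hQ₁ hQ₂)
  have h_inter := Finset.card_union_add_card_inter Q₁ Q₂
  obtain ⟨r, hr, hrF⟩ : ∃ r ∈ Q₁ ∩ Q₂, r ∉ F :=
    Finset.exists_mem_notMem_of_card_lt_card (by omega)
  obtain ⟨hr₁, hr₂⟩ := Finset.mem_inter.mp hr
  exact hhonest r (hQ₁ hr₁) hrF p₁ p₂ (hsent₁ r hr₁) (hsent₂ r hr₂)
end

section
/- Let S be a finite set of receivers with |S| = 3f+1 and F ⊆ S with |F| ≤ f the faulty receivers. Let V be a type of message digests and confirm : S → ℕ → V → Prop model which receiver broadcast a confirmation for which sequence number and digest, and assume every correct receiver confirms at most one digest per sequence number (for all r ∈ S \ F, all s : ℕ, and all v, w : V, if confirm r s v and confirm r s w then v = w). If for some sequence number s there are quorums Q₁, Q₂ ⊆ S with |Q₁| ≥ 2f+1 and |Q₂| ≥ 2f+1 such that confirm r s m₁ holds for every r ∈ Q₁ and confirm r s m₂ holds for every r ∈ Q₂, then m₁ = m₂. -/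
theorem no_equivocation_per_seqnum {α : Type*} [DecidableEq α] {V : Type*} (f : ℕ)
    (S F Q₁ Q₂ : Finset α) (confirm : α → ℕ → V → Prop) (s : ℕ) (m₁ m₂ : V)
    (hS : S.card = 3 * f + 1) (hF : F ⊆ S) (hFcard : F.card ≤ f)
    (hhonest : ∀ r ∈ S, r ∉ F → ∀ s' : ℕ, ∀ v w : V,
      confirm r s' v → confirm r s' w → v = w)
    (hQ₁ : Q₁ ⊆ S) (hQ₂ : Q₂ ⊆ S)
    (hc₁ : 2 * f + 1 ≤ Q₁.card) (hc₂ : 2 * f + 1 ≤ Q₂.card)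
    (hconf₁ : ∀ r ∈ Q₁, confirm r s m₁) (hconf₂ : ∀ r ∈ Q₂, confirm r s m₂) :
    m₁ = m₂ := by
  have hunion : (Q₁ ∪ Q₂).card ≤ S.card := Finset.card_le_card (Finset.union_subset hQ₁ hQ₂)
  have hinter := Finset.card_union_add_card_inter Q₁ Q₂
  obtain ⟨r, hr, hrF⟩ : ∃ r ∈ Q₁ ∩ Q₂, r ∉ F :=
    Finset.exists_mem_notMem_of_card_lt_card (by omega)
  obtain ⟨hr₁, hr₂⟩ := Finset.mem_inter.mp hr
  exact hhonest r (hQ₁ hr₁) hrF s m₁ m₂ (hconf₁ r hr₁) (hconf₂ r hr₂)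
end
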